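/- Every biderivation (without any skew-symmetry assumption) of a finite-dimensional simple Lie algebra L over ℂ is inner: for every biderivation f of L there exists λ ∈ ℂ such that f(x,y) = λ[x,y] for all x, y ∈ L. -/

import Mathlib

/-- Every derivation-like linear map of a simple Lie algebra is inner. -/
theorem bider_inner (L : Type*) [LieRing L] [LieAlgebra ℂ L]
    [FiniteDimensional ℂ L] [LieAlgebra.IsSimple ℂ L]
    (d : L →ₗ[ℂ] L) (h : ∀ y z : L, d ⁅y, z⁆ = ⁅d y, z⁆ + ⁅y, d z⁆) :
    ∃ w : L, ∀ y, d y = ⁅w, y⁆ := by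
  let D : LieDerivation ℂ L L := ⟨d, fun a b => by
    rw [h, ← lie_skew b (d a)]; abel⟩
  obtain ⟨w, hw⟩ := LieDerivation.IsKilling.exists_eq_ad (R := ℂ) D
  refine ⟨w, fun y => ?_⟩
  have := congrArg (fun E : LieDerivation ℂ L L => E y) hw
  simpa [D] using this.symm

theorem bider_central (L : Type*) [LieRing L] [LieAlgebra ℂ L]
    [FiniteDimensional ℂ L] [LieAlgebra.IsSimple ℂ L]
    (w : L) (h : ∀ y : L, ⁅w, y⁆ = 0) : w = 0 := by
  have hw : w ∈ LieAlgebra.center ℂ L := by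
    rw [LieModule.mem_maxTrivSubmodule]
    intro y
    rw [← lie_skew, h, neg_zero]
  rw [LieAlgebra.center_eq_bot] at hw
  simpa using hw

theorem bider_perfect (L : Type*) [LieRing L] [LieAlgebra ℂ L]
    [FiniteDimensional ℂ L] [LieAlgebra.IsSimple ℂ L]
    (P : L →ₗ[ℂ] L) (h : ∀ x y : L, P ⁅x, y⁆ = 0) (z : L) : P z = 0 := by
  have key : ⁅(⊤ : LieIdeal ℂ L), (⊤ : LieIdeal ℂ L)⁆ = ⊤ := by
    rcases LieAlgebra.IsSimple.eq_bot_or_eq_top ⁅(⊤ : LieIdeal ℂ L), (⊤ : LieIdeal ℂ L)⁆ with h0 | h0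
    · exfalso
      apply LieAlgebra.IsSimple.non_abelian ℂ (L := L)
      refine ⟨fun x y => ?_⟩
      have : ⁅x, y⁆ ∈ ⁅(⊤ : LieIdeal ℂ L), (⊤ : LieIdeal ℂ L)⁆ :=
        LieSubmodule.lie_mem_lie (LieSubmodule.mem_top x) (LieSubmodule.mem_top y)
      rw [h0] at this
      simpa using this
    · exact h0
  have hz : z ∈ (⁅(⊤ : LieIdeal ℂ L), (⊤ : LieIdeal ℂ L)⁆ : LieIdeal ℂ L).toSubmodule := by
    rw [key]; trivial
  rw [LieSubmodule.lieIdeal_oper_eq_linear_span'] at hz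
  have : Submodule.span ℂ {m : L | ∃ x ∈ (⊤ : LieIdeal ℂ L), ∃ n ∈ (⊤ : LieIdeal ℂ L), ⁅x, n⁆ = m}
      ≤ LinearMap.ker P := by
    rw [Submodule.span_le]
    rintro _ ⟨x, -, y, -, rfl⟩
    exact h x y
  exact this hz

theorem bider_nondeg (L : Type*) [LieRing L] [LieAlgebra ℂ L]
    [FiniteDimensional ℂ L] [LieAlgebra.IsSimple ℂ L]
    (w : L) (h : ∀ y, killingForm ℂ L w y = 0) : w = 0 :=
  (LieAlgebra.IsKilling.killingForm_nondegenerate ℂ L).1 w h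

/-- Schur's lemma for the adjoint module. -/
theorem bider_schur (L : Type*) [LieRing L] [LieAlgebra ℂ L]
    [FiniteDimensional ℂ L] [LieAlgebra.IsSimple ℂ L]
    (p : L →ₗ[ℂ] L) (h : ∀ x y : L, p ⁅x, y⁆ = ⁅x, p y⁆) : ∃ c : ℂ, ∀ x, p x = c • x := by
  have : Nontrivial L := by
    by_contra hn
    rw [not_nontrivial_iff_subsingleton] at hn
    exact LieAlgebra.IsSimple.non_abelian ℂ (L := L) ⟨fun x y => Subsingleton.elim _ _⟩
  obtain ⟨c, hc⟩ := Module.End.exists_eigenvalue p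
  let I : LieIdeal ℂ L :=
    { Module.End.eigenspace p c with
      lie_mem := by
        intro x m hm
        change m ∈ Module.End.eigenspace p c at hm
        change ⁅x, m⁆ ∈ Module.End.eigenspace p c
        rw [Module.End.mem_eigenspace_iff] at hm ⊢
        rw [h, hm, lie_smul] }
  obtain ⟨v, hv⟩ := hc.exists_hasEigenvector
  have hvI : v ∈ I := hv.1
  refine ⟨c, fun x => ?_⟩
  rcases LieAlgebra.IsSimple.eq_bot_or_eq_top I with h0 | h0
  · rw [h0] at hvI
    exact absurd (by simpa using hvI) hv.2
  · have hx : x ∈ I := by rw [h0]; trivial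
    exact Module.End.mem_eigenspace_iff.1 hx

theorem biderivation_of_simple_lie_algebra_is_inner
    (L : Type*) [LieRing L] [LieAlgebra ℂ L]
    [FiniteDimensional ℂ L] [LieAlgebra.IsSimple ℂ L]
    (f : L →ₗ[ℂ] L →ₗ[ℂ] L)
    (h1 : ∀ x y z : L, f ⁅x, y⁆ z = ⁅x, f y z⁆ + ⁅f x z, y⁆)
    (h2 : ∀ x y z : L, f x ⁅y, z⁆ = ⁅f x y, z⁆ + ⁅y, f x z⁆) :
    ∃ lam : ℂ, ∀ x y : L, f x y = lam • ⁅x, y⁆ := by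
  choose φ' hφ' using fun x => bider_inner L (f x) (h2 x)
  choose ψ hψ using fun z => bider_inner L (f.flip z) (fun x y => by
    simp only [LinearMap.flip_apply]; rw [h1]; abel)
  simp only [LinearMap.flip_apply] at hψ
  have ext0 : ∀ a b : L, (∀ y : L, ⁅a, y⁆ = ⁅b, y⁆) → a = b := fun a b hab =>
    sub_eq_zero.1 (bider_central L _ fun y => by rw [sub_lie, hab, sub_self])
  have extK : ∀ a b : L, (∀ y, killingForm ℂ L a y = killingForm ℂ L b y) → a = b :=
    fun a b hab => sub_eq_zero.1 (bider_nondeg L _ fun y => by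
      rw [map_sub, LinearMap.sub_apply, hab, sub_self])
  have inv : ∀ a b c : L, killingForm ℂ L ⁅a, b⁆ c = killingForm ℂ L a ⁅b, c⁆ :=
    fun a b c => LieModule.traceForm_apply_lie_apply ℂ L L a b c
  have comm : ∀ a b : L, killingForm ℂ L a b = killingForm ℂ L b a :=
    fun a b => LieModule.traceForm_comm ℂ L L a b
  -- the symmetric part vanishes
  have skew : ∀ x y, f y x = - f x y := by
    have T12 : ∀ x y z : L, killingForm ℂ L (f x y + f y x) z
        = killingForm ℂ L (f y x + f x y) z := fun x y z => by rw [add_comm]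
    have T23 : ∀ x y z : L, killingForm ℂ L (f x y + f y x) z
        = - killingForm ℂ L (f x z + f z x) y := by
      intro x y z
      have e : ∀ w, f x w + f w x = ⁅φ' x + ψ x, w⁆ := fun w => by
        rw [hφ', hψ, add_lie]
      rw [e, e, inv, inv, ← lie_skew y z, map_neg]
    intro x y
    have : f x y + f y x = 0 := by
      apply bider_nondeg L
      intro z
      have a1 := T23 x y z
      have a2 := T12 x z y
      have a3 := T23 z x y
      have a4 := T12 z y x
      have a5 := T23 y z x
      have a6 := T12 y x z
      grind
    exact eq_neg_of_add_eq_zero_right this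
  let φ : L →ₗ[ℂ] L :=
    { toFun := φ'
      map_add' := fun a b => ext0 _ _ fun y => by
        rw [add_lie, ← hφ', ← hφ', ← hφ', map_add, LinearMap.add_apply]
      map_smul' := fun c a => ext0 _ _ fun y => by
        rw [RingHom.id_apply, smul_lie, ← hφ', ← hφ', map_smul, LinearMap.smul_apply] }
  have hφ : ∀ x y : L, f x y = ⁅φ x, y⁆ := hφ'
  have hφ2 : ∀ x y : L, f x y = ⁅x, φ y⁆ := fun x y => by
    rw [skew y x, hφ, lie_skew]
  -- the key identity
  have A0 : ∀ x y u v : L, ⁅f x y, ⁅u, v⁆⁆ - ⁅⁅x, y⁆, f u v⁆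
      = ⁅f u y, ⁅x, v⁆⁆ - ⁅⁅u, y⁆, f x v⁆ := by
    intro x y u v
    have e1 : f ⁅x, u⁆ ⁅y, v⁆ = ⁅x, ⁅f u y, v⁆⁆ + ⁅x, ⁅y, f u v⁆⁆
        + (⁅⁅f x y, v⁆, u⁆ + ⁅⁅y, f x v⁆, u⁆) := by
      rw [h1, h2, h2, lie_add, add_lie]
    have e2 : f ⁅x, u⁆ ⁅y, v⁆ = ⁅⁅x, f u y⁆, v⁆ + ⁅⁅f x y, u⁆, v⁆
        + (⁅y, ⁅x, f u v⁆⁆ + ⁅y, ⁅f x v, u⁆⁆) := by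
      rw [h2, h1, h1, lie_add, add_lie]
    have j1 := leibniz_lie x (f u y) v
    have j2 := leibniz_lie x y (f u v)
    have j3 := lie_lie (f x y) u v
    have j3' := lie_lie (f x y) v u
    have j4 := lie_lie y (f x v) u
    have j5 := leibniz_lie (f x y) u v
    have j6 := leibniz_lie y (f x v) u
    have s1 := lie_skew u ⁅f x y, v⁆
    have s2 := lie_skew (f x v) ⁅y, u⁆
    have s3 : ⁅⁅u, y⁆, f x v⁆ = - ⁅⁅y, u⁆, f x v⁆ := by rw [← lie_skew u y, neg_lie]
    rw [e1] at e2
    grind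
  have A : ∀ x y u v : L, ⁅f x y, ⁅u, v⁆⁆ = ⁅⁅x, y⁆, f u v⁆ := by
    have S : ∀ x y u v : L, ⁅f y x, ⁅u, v⁆⁆ - ⁅⁅y, x⁆, f u v⁆
      = - (⁅f x y, ⁅u, v⁆⁆ - ⁅⁅x, y⁆, f u v⁆) := by
      intro x y u v
      rw [skew x y, ← lie_skew y x, neg_lie, neg_lie]; abel
    intro x y u v
    have a1 := A0 x y u v
    have a2 := S y u x v
    have a3 := A0 y u x v
    have a4 := S u x y v
    have a5 := A0 u x y v
    have a6 := S x y u v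
    have : (2 : ℂ) • (⁅f x y, ⁅u, v⁆⁆ - ⁅⁅x, y⁆, f u v⁆) = 0 := by
      rw [two_smul]
      grind
    rcases smul_eq_zero.1 this with h | h
    · norm_num at h
    · exact sub_eq_zero.1 h
  -- the adjoint of `φ`
  have hnd := LieAlgebra.IsKilling.killingForm_nondegenerate ℂ L
  obtain ⟨g, hg⟩ : ∃ g : L →ₗ[ℂ] L,
      ∀ x y, killingForm ℂ L (g x) y = killingForm ℂ L x (φ y) :=
    ⟨_, LinearMap.BilinForm.isAdjointPairLeftAdjointOfNondegenerate (killingForm ℂ L) hnd φ⟩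
  have gb : ∀ x y : L, g ⁅x, y⁆ = f x y := fun x y => extK _ _ fun z => by
    rw [hg, inv, ← hφ2, hφ, ← inv, ← hφ2]
  have gq : ∀ x y : L, ⁅g x, y⁆ = ⁅x, g y⁆ := by
    have s1 : ∀ x u v : L, ⁅g x, ⁅u, v⁆⁆ = ⁅x, g ⁅u, v⁆⁆ := by
      intro x u v
      have := bider_perfect L
        ((-(LieAlgebra.ad ℂ L ⁅u, v⁆ : L →ₗ[ℂ] L)) ∘ₗ g + (LieAlgebra.ad ℂ L (g ⁅u, v⁆) : L →ₗ[ℂ] L))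
        (fun a b => by
          simp only [LinearMap.add_apply, LinearMap.comp_apply, LinearMap.neg_apply,
            LieAlgebra.ad_apply]
          rw [gb, gb, lie_skew, A, ← lie_skew (f u v), add_neg_cancel]) x
      simp only [LinearMap.add_apply, LinearMap.comp_apply, LinearMap.neg_apply,
            LieAlgebra.ad_apply, lie_skew] at this
      rw [← lie_skew x, eq_neg_iff_add_eq_zero]
      exact this
    intro x y
    have := bider_perfect L
        ((LieAlgebra.ad ℂ L (g x) : L →ₗ[ℂ] L) - (LieAlgebra.ad ℂ L x : L →ₗ[ℂ] L) ∘ₗ g)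
        (fun a b => by
          simp only [LinearMap.sub_apply, LinearMap.comp_apply, LieAlgebra.ad_apply]
          rw [s1, sub_self]) y
    exact sub_eq_zero.1 this
  have φb : ∀ x y : L, φ ⁅x, y⁆ = ⁅x, g y⁆ := fun x y => extK _ _ fun z => by
    rw [comm, ← hg, comm, inv, ← gq, ← inv]
  have hp : ∀ x y : L, (φ - g) ⁅x, y⁆ = - ⁅(φ - g) x, y⁆ := fun x y => by
    rw [LinearMap.sub_apply, LinearMap.sub_apply, φb, gb, hφ, sub_lie, gq]; abel
  have hp2 : ∀ x y : L, (φ - g) ⁅x, y⁆ = - ⁅x, (φ - g) y⁆ := fun x y => by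
    rw [LinearMap.sub_apply, LinearMap.sub_apply, φb, gb, hφ2, lie_sub]; abel
  have p0 : ∀ x, (φ - g) x = 0 := by
    intro x
    have key : ∀ y z : L, ⁅(φ - g) x, ⁅y, z⁆⁆ = 0 := by
      intro y z
      have j := congrArg (φ - g) (leibniz_lie x y z)
      rw [map_add, hp, hp ⁅x, y⁆, hp x y, hp2 y, hp x z, neg_lie, lie_neg,
        leibniz_lie ((φ - g) x) y z] at j
      rw [leibniz_lie ((φ - g) x) y z]
      have : (2 : ℂ) • (⁅⁅(φ - g) x, y⁆, z⁆ + ⁅y, ⁅(φ - g) x, z⁆⁆) = 0 := by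
        rw [two_smul]
        grind
      rcases smul_eq_zero.1 this with h | h
      · norm_num at h
      · exact h
    exact bider_central L _ (bider_perfect L (LieAlgebra.ad ℂ L ((φ - g) x) : L →ₗ[ℂ] L) key)
  obtain ⟨c, hc⟩ := bider_schur L φ (fun x y => by
    rw [φb, sub_eq_zero.1 (p0 y)])
  exact ⟨c, fun x y => by rw [hφ, hc, smul_lie]⟩
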